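/- Let E, F, G be Polish spaces, f : E → F and g : F → G measurable, and let X_k, Y_k, Z_k be random variables in E, F, G respectively. If (X_k, Y_k) converges in distribution to (X, f(X)) and (Y_k, Z_k) converges in distribution to (Y, g(Y)) where Y has the law of f(X), then (X_k, Y_k, Z_k) converges in distribution to (X, f(X), g(f(X))). -/

import Mathlib

open MeasureTheory Filter

open Topology in
lemma tight_of_tendsto_aux {S : Type*} [TopologicalSpace S] [PolishSpace S] [MeasurableSpace S]
    [BorelSpace S] {μs : ℕ → ProbabilityMeasure S} {μ : ProbabilityMeasure S}
    (h : Tendsto μs atTop (𝓝 μ)) :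
    IsTightMeasureSet (Set.range fun k => (μs k : Measure S)) := by
  let := TopologicalSpace.upgradeIsCompletelyMetrizable S
  have hc : IsCompact (closure (Set.range μs)) :=
    h.isCompact_insert_range.closure_of_subset (Set.subset_insert _ _)
  refine (isTightMeasureSet_of_isCompact_closure hc).subset ?_
  rintro _ ⟨k, rfl⟩
  exact ⟨μs k, ⟨k, rfl⟩, rfl⟩

/-- Weak convergence of coupled random variables: if `(X_k, Y_k) ⇒ (X, f(X))` and
`(Y_k, Z_k) ⇒ (Y, g(Y))` with `Y` distributed as `f(X)`, then
`(X_k, Y_k, Z_k) ⇒ (X, f(X), g(f(X)))`. -/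
theorem stmt19 {E F G : Type*}
    [TopologicalSpace E] [PolishSpace E] [MeasurableSpace E] [BorelSpace E]
    [TopologicalSpace F] [PolishSpace F] [MeasurableSpace F] [BorelSpace F]
    [TopologicalSpace G] [PolishSpace G] [MeasurableSpace G] [BorelSpace G]
    {Ω : ℕ → Type*} [∀ k, MeasurableSpace (Ω k)]
    (P : ∀ k, Measure (Ω k)) [∀ k, IsProbabilityMeasure (P k)]
    {Ω' : Type*} [MeasurableSpace Ω'] (P' : Measure Ω') [IsProbabilityMeasure P']
    (X : ∀ k, Ω k → E) (Y : ∀ k, Ω k → F) (Z : ∀ k, Ω k → G) (X' : Ω' → E)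
    (hXmeas : ∀ k, Measurable (X k)) (hYmeas : ∀ k, Measurable (Y k))
    (hZmeas : ∀ k, Measurable (Z k)) (hX'meas : Measurable X')
    (f : E → F) (g : F → G) (hf : Measurable f) (hg : Measurable g)
    (hconv1 : ∀ h : BoundedContinuousFunction (E × F) ℝ,
      Tendsto (fun k => ∫ ω, h (X k ω, Y k ω) ∂(P k)) atTop
        (nhds (∫ ω, h (X' ω, f (X' ω)) ∂P')))
    (hconv2 : ∀ h : BoundedContinuousFunction (F × G) ℝ,
      Tendsto (fun k => ∫ ω, h (Y k ω, Z k ω) ∂(P k)) atTop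
        (nhds (∫ ω, h (f (X' ω), g (f (X' ω))) ∂P'))) :
    ∀ h : BoundedContinuousFunction (E × F × G) ℝ,
      Tendsto (fun k => ∫ ω, h (X k ω, Y k ω, Z k ω) ∂(P k)) atTop
        (nhds (∫ ω, h (X' ω, f (X' ω), g (f (X' ω))) ∂P')) := by
  classical
  let μ : ℕ → ProbabilityMeasure (E × F × G) := fun k =>
    ⟨(P k).map (fun ω => (X k ω, Y k ω, Z k ω)),
      Measure.isProbabilityMeasure_map (by fun_prop)⟩
  let ν : ProbabilityMeasure (E × F × G) :=
    ⟨P'.map (fun ω => (X' ω, f (X' ω), g (f (X' ω)))),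
      Measure.isProbabilityMeasure_map (by fun_prop)⟩
  have hμ : ∀ k, (μ k : Measure (E × F × G)) = (P k).map (fun ω => (X k ω, Y k ω, Z k ω)) :=
    fun k => rfl
  have hν : (ν : Measure (E × F × G)) = P'.map (fun ω => (X' ω, f (X' ω), g (f (X' ω)))) := rfl
  let p : E × F × G → E × F := fun x => (x.1, x.2.1)
  let q : E × F × G → F × G := fun x => x.2
  have hp : Continuous p := by fun_prop
  have hq : Continuous q := by fun_prop
  have h1 : Tendsto (fun k => (μ k).map hp.measurable.aemeasurable) atTop
      (nhds (ν.map hp.measurable.aemeasurable)) := by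
    rw [ProbabilityMeasure.tendsto_iff_forall_integral_tendsto]
    intro h
    convert hconv1 h using 2
    · simp only [ProbabilityMeasure.toMeasure_map, hμ]
      rw [Measure.map_map hp.measurable (by fun_prop), integral_map (by fun_prop)
        h.continuous.measurable.aestronglyMeasurable]
      rfl
    · simp only [ProbabilityMeasure.toMeasure_map, hν]
      rw [Measure.map_map hp.measurable (by fun_prop), integral_map (by fun_prop)
        h.continuous.measurable.aestronglyMeasurable]
      rfl
  have h2 : Tendsto (fun k => (μ k).map hq.measurable.aemeasurable) atTop
      (nhds (ν.map hq.measurable.aemeasurable)) := by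
    rw [ProbabilityMeasure.tendsto_iff_forall_integral_tendsto]
    intro h
    convert hconv2 h using 2
    · simp only [ProbabilityMeasure.toMeasure_map, hμ]
      rw [Measure.map_map hq.measurable (by fun_prop), integral_map (by fun_prop)
        h.continuous.measurable.aestronglyMeasurable]
      rfl
    · simp only [ProbabilityMeasure.toMeasure_map, hν]
      rw [Measure.map_map hq.measurable (by fun_prop), integral_map (by fun_prop)
        h.continuous.measurable.aestronglyMeasurable]
      rfl
  have t1 := (tight_of_tendsto_aux h1).map continuous_fst
  have t2 := tight_of_tendsto_aux h2
  have ht : IsTightMeasureSet {((m : ProbabilityMeasure (E × F × G)) : Measure (E × F × G)) |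
      m ∈ Set.range μ} := by
    refine IsTightMeasureSet.prodMk (t1.subset ?_) (t2.subset ?_)
    · rintro _ ⟨_, ⟨_, ⟨k, rfl⟩, rfl⟩, rfl⟩
      refine ⟨_, ⟨k, rfl⟩, ?_⟩
      simp only [ProbabilityMeasure.toMeasure_map]
      rw [Measure.map_map measurable_fst hp.measurable]
      rfl
    · rintro _ ⟨_, ⟨_, ⟨k, rfl⟩, rfl⟩, rfl⟩
      exact ⟨k, rfl⟩
  have hc := isCompact_closure_of_isTightMeasureSet ht
  have hmain : Tendsto μ atTop (nhds ν) := by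
    rw [tendsto_iff_ultrafilter]
    intro U hU
    obtain ⟨ρ, -, hρ⟩ := hc.ultrafilter_le_nhds (U.map μ) (by
      rw [le_principal_iff]
      exact mem_of_superset (range_mem_map) subset_closure)
    have hρ' : Tendsto μ U (nhds ρ) := hρ
    have e1 := tendsto_nhds_unique
      (ProbabilityMeasure.tendsto_map_of_tendsto_of_continuous μ ρ hρ' hp) (h1.mono_left hU)
    have e2 := tendsto_nhds_unique
      (ProbabilityMeasure.tendsto_map_of_tendsto_of_continuous μ ρ hρ' hq) (h2.mono_left hU)
    replace e1 := congrArg (fun m : ProbabilityMeasure (E × F) => (m : Measure (E × F))) e1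
    replace e2 := congrArg (fun m : ProbabilityMeasure (F × G) => (m : Measure (F × G))) e2
    simp only [ProbabilityMeasure.toMeasure_map, hν] at e1 e2
    rw [Measure.map_map hp.measurable (by fun_prop)] at e1
    rw [Measure.map_map hq.measurable (by fun_prop)] at e2
    have a2 : ∀ᵐ x ∂(ρ : Measure (E × F × G)), x.2.2 = g x.2.1 := by
      have : ∀ᵐ x ∂((ρ : Measure (E × F × G)).map q), x.2 = g x.1 := by
        rw [e2]
        refine (ae_map_iff (by fun_prop)
          (measurableSet_eq_fun measurable_snd (hg.comp measurable_fst))).2 ?_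
        exact ae_of_all _ fun _ => rfl
      exact ae_of_ae_map hq.measurable.aemeasurable this
    have hr : Measurable (fun x : E × F => (x.1, x.2, g x.2)) := by fun_prop
    have : ρ = ν := by
      apply Subtype.ext
      calc (ρ : Measure (E × F × G)) = (ρ : Measure (E × F × G)).map id := Measure.map_id.symm
        _ = (ρ : Measure (E × F × G)).map ((fun x : E × F => (x.1, x.2, g x.2)) ∘ p) := by
          apply Measure.map_congr
          filter_upwards [a2] with x hx
          rcases x with ⟨x, y, z⟩
          simp only at hx
          simp [p, hx]
        _ = ((ρ : Measure (E × F × G)).map p).map (fun x : E × F => (x.1, x.2, g x.2)) :=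
          (Measure.map_map hr hp.measurable).symm
        _ = _ := by
          rw [e1, Measure.map_map hr (by fun_prop)]
          rfl
    rw [← this]
    exact hρ'
  intro h
  have := (ProbabilityMeasure.tendsto_iff_forall_integral_tendsto.1 hmain) h
  convert this using 2
  · rw [hμ]
    rw [integral_map (by fun_prop) h.continuous.measurable.aestronglyMeasurable]
  · rw [hν]
    rw [integral_map (by fun_prop) h.continuous.measurable.aestronglyMeasurable]
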